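/- arXiv:2201.09781 — 3 statements merged into one kernel-verified Lean document; each statement's English description precedes it below -/
import Mathlib

section
/- Let d ≥ 1 and let f ∈ C^∞(ℝ^d) be such that ‖∂^β f‖_{L²(ℝ^d)} ≤ C₁ C₂^{|β|} β! for all multi-indices β ∈ ℕ₀^d, with some constants C₁, C₂ > 0. Then f is (real-)analytic on ℝ^d. -/
open MeasureTheory
open scoped ENNReal

/-- The partial derivative in the `i`-th coordinate direction. -/
noncomputable def pderivE {d : ℕ} (i : Fin d) (f : EuclideanSpace ℝ (Fin d) → ℝ) :
    EuclideanSpace ℝ (Fin d) → ℝ :=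
  fun x => fderiv ℝ f x (EuclideanSpace.single i 1)

/-- The multi-index partial derivative `∂^β f` for `β ∈ ℕ₀^d`. -/
noncomputable def mderiv {d : ℕ} (β : Fin d → ℕ) (f : EuclideanSpace ℝ (Fin d) → ℝ) :
    EuclideanSpace ℝ (Fin d) → ℝ :=
  (List.finRange d).foldr (fun i g => (pderivE i)^[β i] g) f


theorem analytic_of_bound {E : Type*} [NormedAddCommGroup E] [NormedSpace ℝ E]
    (f : E → ℝ) (hf : ContDiff ℝ (⊤ : ℕ∞) f) (A B : ℝ) (hA : 0 ≤ A) (hB : 0 < B)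
    (h : ∀ n x, ‖iteratedFDeriv ℝ n f x‖ ≤ A * B ^ n * (n.factorial : ℝ)) (x : E) :
    AnalyticAt ℝ f x := by
  let p : FormalMultilinearSeries ℝ E ℝ := fun n => (n.factorial : ℝ)⁻¹ • iteratedFDeriv ℝ n f x
  have hp : ∀ n, ‖p n‖ ≤ A * B ^ n := by
    intro n
    have hn : (0 : ℝ) < n.factorial := by exact_mod_cast n.factorial_pos
    simp only [p, norm_smul, norm_inv, Real.norm_natCast]
    rw [inv_mul_le_iff₀ hn]
    linarith [h n x]
  let r : NNReal := ⟨1 / (2 * B), by positivity⟩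
  have hr : (r : ℝ) = 1 / (2 * B) := rfl
  have hBr : B * r = 1 / 2 := by rw [hr]; field_simp
  have hr0 : (0 : ℝ) < r := by rw [hr]; positivity
  refine ⟨p, r, ⟨?_, by exact_mod_cast hr0, ?_⟩⟩
  · apply p.le_radius_of_bound A
    intro n
    calc ‖p n‖ * (r : ℝ) ^ n ≤ (A * B ^ n) * (r : ℝ) ^ n := by gcongr; exact hp n
      _ = A * (1 / 2) ^ n := by rw [mul_assoc, ← mul_pow, hBr]
      _ ≤ A * 1 := by
        gcongr
        exact pow_le_one₀ (by norm_num) (by norm_num)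
      _ = A := mul_one A
  · intro y hy
    have hy' : ‖y‖ ≤ r := by
      rw [Metric.mem_eball, edist_zero_right, enorm_eq_nnnorm] at hy
      exact_mod_cast hy.le
    have hBy : B * ‖y‖ ≤ 1 / 2 := by rw [← hBr]; gcongr
    have hterm : ∀ n, ‖p n (fun _ => y)‖ ≤ A * (1 / 2) ^ n := by
      intro n
      calc ‖p n (fun _ => y)‖ ≤ ‖p n‖ * ‖y‖ ^ n := by
            simpa using (p n).le_opNorm (fun _ => y)
        _ ≤ (A * B ^ n) * ‖y‖ ^ n := by gcongr; exact hp n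
        _ = A * (B * ‖y‖) ^ n := by rw [mul_assoc, ← mul_pow]
        _ ≤ _ := by gcongr
    have hsum : Summable fun n => ‖p n (fun _ => y)‖ :=
      Summable.of_nonneg_of_le (fun _ => norm_nonneg _) hterm
        ((summable_geometric_of_lt_one (by norm_num) (by norm_num)).mul_left A)
    rw [hasSum_iff_tendsto_nat_of_summable_norm hsum]
    rw [← Filter.tendsto_add_atTop_iff_nat 1, tendsto_iff_norm_sub_tendsto_zero]
    have hlim : Filter.Tendsto (fun n : ℕ => A * ((n + 1 : ℕ) * (1 / 2 : ℝ) ^ (n + 1)))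
        Filter.atTop (nhds 0) := by
      have := (tendsto_self_mul_const_pow_of_lt_one (r := (1 / 2 : ℝ)) (by norm_num)
        (by norm_num))
      simpa using ((Filter.tendsto_add_atTop_iff_nat 1).2 this).const_mul A
    refine squeeze_zero (fun _ => norm_nonneg _) (fun n => ?_) hlim
    have ht := map_add_eq_sum_add_integral_iteratedFDeriv (f := f) (x := x) (y := y) (n := n)
      (fun t _ => hf.contDiffAt.of_le (by exact_mod_cast le_top))
    have e : ∑ i ∈ Finset.range (n + 1), p i (fun _ => y) =
      ∑ k ∈ Finset.range (n + 1), (k.factorial : ℝ)⁻¹ • (iteratedFDeriv ℝ k f x (fun _ ↦ y)) := rfl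
    rw [e, ht, sub_add_cancel_left, norm_neg, norm_smul]
    have hn : (0 : ℝ) < n.factorial := by exact_mod_cast n.factorial_pos
    rw [norm_inv, Real.norm_natCast, inv_mul_le_iff₀ hn]
    have := intervalIntegral.norm_integral_le_of_norm_le_const (a := (0 : ℝ)) (b := 1)
      (f := fun t : ℝ => (1 - t)^n • iteratedFDeriv ℝ (n + 1) f (x + t • y) (fun _ ↦ y))
      (C := n.factorial * (A * ((n + 1 : ℕ) * (1 / 2 : ℝ) ^ (n + 1)))) ?_
    · simpa using this
    · intro t ht
      rw [Set.uIoc_of_le zero_le_one] at ht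
      have h1 : ‖(1 - t) ^ n‖ ≤ 1 := by
        rw [norm_pow]
        apply pow_le_one₀ (norm_nonneg _)
        rw [Real.norm_eq_abs, abs_le]; constructor <;> linarith [ht.1, ht.2]
      rw [norm_smul]
      calc _ ≤ 1 * (‖iteratedFDeriv ℝ (n + 1) f (x + t • y)‖ * ‖y‖ ^ (n + 1)) := by
            gcongr
            simpa using (iteratedFDeriv ℝ (n + 1) f (x + t • y)).le_opNorm (fun _ => y)
        _ ≤ 1 * ((A * B ^ (n + 1) * ((n + 1).factorial : ℝ)) * ‖y‖ ^ (n + 1)) := by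
            gcongr; exact h _ _
        _ = n.factorial * (A * ((n + 1 : ℕ) * (B * ‖y‖) ^ (n + 1))) := by
            rw [Nat.factorial_succ, mul_pow]; push_cast; ring
        _ ≤ _ := by gcongr

/-- Iterated partial derivative along a list of coordinates. -/
noncomputable def lderiv {d : ℕ} (L : List (Fin d)) (f : EuclideanSpace ℝ (Fin d) → ℝ) :
    EuclideanSpace ℝ (Fin d) → ℝ := L.foldr pderivE f

theorem contDiff_pderivE {d : ℕ} (i : Fin d) {f : EuclideanSpace ℝ (Fin d) → ℝ}
    (hf : ContDiff ℝ (⊤ : ℕ∞) f) : ContDiff ℝ (⊤ : ℕ∞) (pderivE i f) := by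
  unfold pderivE
  exact (hf.fderiv_right (m := (⊤ : ℕ∞)) (by simp)).clm_apply contDiff_const

theorem contDiff_lderiv {d : ℕ} (L : List (Fin d)) {f : EuclideanSpace ℝ (Fin d) → ℝ}
    (hf : ContDiff ℝ (⊤ : ℕ∞) f) : ContDiff ℝ (⊤ : ℕ∞) (lderiv L f) := by
  induction L with
  | nil => exact hf
  | cons i L ih => exact contDiff_pderivE i ih

theorem pderivE_comm {d : ℕ} (i j : Fin d) {f : EuclideanSpace ℝ (Fin d) → ℝ}
    (hf : ContDiff ℝ (⊤ : ℕ∞) f) : pderivE i (pderivE j f) = pderivE j (pderivE i f) := by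
  funext x
  have hs : IsSymmSndFDerivAt ℝ f x := hf.contDiffAt.isSymmSndFDerivAt (by
    rw [minSmoothness_of_isRCLikeNormedField]; 
    exact WithTop.coe_le_coe.2 (le_top : (2 : ℕ∞) ≤ ⊤))
  have hd : DifferentiableAt ℝ (fderiv ℝ f) x :=
    ((hf.fderiv_right (m := (⊤ : ℕ∞)) (by simp)).differentiable (by simp)) x
  unfold pderivE
  rw [fderiv_clm_apply hd (differentiableAt_const _), fderiv_clm_apply hd (differentiableAt_const _)]
  simpa using hs.eq _ _

theorem lderiv_perm {d : ℕ} {L L' : List (Fin d)} (h : L.Perm L')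
    {f : EuclideanSpace ℝ (Fin d) → ℝ}
    (hf : ContDiff ℝ (⊤ : ℕ∞) f) : lderiv L f = lderiv L' f := by
  induction h with
  | nil => rfl
  | cons i _ ih => exact congrArg (pderivE i) ih
  | swap i j L => exact pderivE_comm _ _ (contDiff_lderiv L hf)
  | trans _ _ h1 h2 => exact h1.trans h2

theorem mderiv_eq {d : ℕ} (β : Fin d → ℕ) (f : EuclideanSpace ℝ (Fin d) → ℝ) :
    mderiv β f = lderiv ((List.finRange d).flatMap fun i => List.replicate (β i) i) f := by
  unfold mderiv lderiv
  have hrep : ∀ (i : Fin d) n (g : EuclideanSpace ℝ (Fin d) → ℝ),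
      (pderivE i)^[n] g = (List.replicate n i).foldr pderivE g := by
    intro i n g
    induction n with
    | zero => rfl
    | succ n ih => rw [Function.iterate_succ_apply', ih]; rfl
  induction List.finRange d with
  | nil => rfl
  | cons i l ih => rw [List.foldr_cons, ih, List.flatMap_cons, List.foldr_append, hrep]

theorem lderiv_eq_mderiv {d : ℕ} (L : List (Fin d)) {f : EuclideanSpace ℝ (Fin d) → ℝ}
    (hf : ContDiff ℝ (⊤ : ℕ∞) f) : lderiv L f = mderiv (fun i => L.count i) f := by
  rw [mderiv_eq]
  apply lderiv_perm _ hf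
  rw [List.perm_iff_count]
  intro a
  rw [List.count_flatMap]
  simp only [Function.comp_def, List.count_replicate]
  have := Fin.sum_univ_def (fun i : Fin d => if i == a then L.count i else 0)
  rw [← this]
  simp

theorem lderiv_eLpNorm {d : ℕ} 
    (f : EuclideanSpace ℝ (Fin d) → ℝ) (hf : ContDiff ℝ (⊤ : ℕ∞) f)
    (C₁ C₂ : ℝ) (hC₁ : 0 < C₁) (hC₂ : 0 < C₂)
    (hbound : ∀ β : Fin d → ℕ,
      eLpNorm (mderiv β f) 2 volume ≤
        ENNReal.ofReal (C₁ * C₂ ^ (∑ i, β i) * ((∏ i, (β i).factorial : ℕ) : ℝ)))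
    (L : List (Fin d)) :
    eLpNorm (lderiv L f) 2 volume ≤
      ENNReal.ofReal (C₁ * C₂ ^ L.length * (L.length.factorial : ℝ)) := by
  rw [lderiv_eq_mderiv L hf]
  refine (hbound _).trans (ENNReal.ofReal_le_ofReal ?_)
  have hs : ∑ i, L.count i = L.length := by
    have := Multiset.sum_count_eq_card (s := Finset.univ) (m := (L : Multiset (Fin d)))
      (fun _ _ => Finset.mem_univ _)
    simpa using this
  rw [hs]
  gcongr
  rw [← hs]
  exact Nat.le_of_dvd (Nat.factorial_pos _) (Nat.prod_factorial_dvd_factorial_sum _ _)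

theorem iteratedFDeriv_basis {d : ℕ} 
    (f : EuclideanSpace ℝ (Fin d) → ℝ) (hf : ContDiff ℝ (⊤ : ℕ∞) f) (n : ℕ) (r : Fin n → Fin d)
    (x : EuclideanSpace ℝ (Fin d)) :
    iteratedFDeriv ℝ n f x (fun j => EuclideanSpace.single (r j) 1) = lderiv (List.ofFn r) f x := by
  induction n generalizing x with
  | zero => simp [lderiv]
  | succ n ih =>
    rw [DifferentiableAt.iteratedFDeriv_succ_apply_left'
      (hf.contDiffAt.differentiableAt_iteratedFDeriv (by exact_mod_cast ENat.natCast_lt_top n))]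
    have : (fun y ↦ iteratedFDeriv ℝ n f y (Fin.tail fun j => EuclideanSpace.single (r j) (1:ℝ)))
      = lderiv (List.ofFn fun j => r j.succ) f := by
      funext y
      rw [← ih (fun j => r j.succ) y]
      rfl
    rw [this, List.ofFn_succ]
    rfl

theorem norm_iteratedFDeriv_le_of_lderiv {d : ℕ} 
    (f : EuclideanSpace ℝ (Fin d) → ℝ) (hf : ContDiff ℝ (⊤ : ℕ∞) f) (n : ℕ)
    (x : EuclideanSpace ℝ (Fin d)) (M : ℝ) (hM : 0 ≤ M)
    (h : ∀ L : List (Fin d), L.length = n → |lderiv L f x| ≤ M) :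
    ‖iteratedFDeriv ℝ n f x‖ ≤ d ^ n * M := by
  apply ContinuousMultilinearMap.opNorm_le_bound (by positivity)
  intro v
  have hv : v = fun j => ∑ i : Fin d, (v j i) • EuclideanSpace.single i (1 : ℝ) := by
    funext j
    have := (EuclideanSpace.basisFun (Fin d) ℝ).sum_repr (v j)
    simpa using this.symm
  conv_lhs => rw [hv]
  rw [ContinuousMultilinearMap.map_sum]
  refine (norm_sum_le _ _).trans ?_
  have : ∀ r ∈ (Finset.univ : Finset (Fin n → Fin d)), 
      ‖iteratedFDeriv ℝ n f x (fun j => (v j (r j)) • EuclideanSpace.single (r j) (1 : ℝ))‖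
      ≤ M * ∏ j, ‖v j‖ := by
    intro r _
    rw [ContinuousMultilinearMap.map_smul_univ, iteratedFDeriv_basis f hf, norm_smul, norm_prod,
      mul_comm]
    gcongr with j
    · exact h _ (by simp)
    · exact PiLp.norm_apply_le (v j) (r j)
  refine (Finset.sum_le_card_nsmul _ _ _ this).trans_eq ?_
  simp [mul_assoc]

theorem sobolev_one_dim (g g' : ℝ → ℝ) (hg : ∀ t, HasDerivAt g (g' t) t) (hg' : Continuous g')
    (x : ℝ) :
    ENNReal.ofReal (g x ^ 2) ≤
      2 * ∫⁻ t, (ENNReal.ofReal (g t ^ 2) + ENNReal.ofReal (g' t ^ 2)) := by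
  have hgc : Continuous g := continuous_iff_continuousAt.2 fun t => (hg t).continuousAt
  have hφ : ∀ t ∈ Set.uIcc x (x + 1), HasDerivAt (fun t => (1 + x - t) * g t ^ 2)
      (-(g t ^ 2) + 2 * (1 + x - t) * (g t * g' t)) t := by
    intro t _
    have h1 : HasDerivAt (fun t : ℝ => 1 + x - t) (-1) t := by
      simpa using (hasDerivAt_id t).const_sub (1 + x)
    refine (h1.mul ((hg t).pow 2)).congr_deriv ?_
    simp only [Pi.pow_apply, Nat.cast_ofNat]
    ring
  have hint := intervalIntegral.integral_eq_sub_of_hasDerivAt hφ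
    (Continuous.intervalIntegrable (by fun_prop) _ _)
  have hle : g x ^ 2 ≤ ∫ t in x..(x + 1), (2 * (g t ^ 2 + g' t ^ 2)) := by
    have : g x ^ 2 = ∫ t in x..(x + 1), -(-(g t ^ 2) + 2 * (1 + x - t) * (g t * g' t)) := by
      rw [intervalIntegral.integral_neg, hint]; ring
    rw [this]
    apply intervalIntegral.integral_mono_on (by linarith)
      (Continuous.intervalIntegrable (by fun_prop) _ _)
      (Continuous.intervalIntegrable (by fun_prop) _ _)
    intro t ht
    have h0 : 0 ≤ 1 + x - t := by linarith [ht.2]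
    have h1 : 1 + x - t ≤ 1 := by linarith [ht.1]
    nlinarith [sq_nonneg (g t + (1 + x - t) * g' t), sq_nonneg (g' t), sq_nonneg (g t),
      mul_nonneg (mul_nonneg h0 (sub_nonneg.2 h1)) (sq_nonneg (g' t)),
      mul_nonneg (sub_nonneg.2 h1) (sq_nonneg (g' t))]
  calc ENNReal.ofReal (g x ^ 2)
      ≤ ENNReal.ofReal (∫ t in x..(x + 1), (2 * (g t ^ 2 + g' t ^ 2))) :=
        ENNReal.ofReal_le_ofReal hle
    _ = ∫⁻ t in Set.Ioc x (x + 1), ENNReal.ofReal (2 * (g t ^ 2 + g' t ^ 2)) := by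
        rw [intervalIntegral.integral_of_le (by linarith), ofReal_integral_eq_lintegral_ofReal]
        · exact ((Continuous.intervalIntegrable (by fun_prop) _ _).1)
        · exact Filter.Eventually.of_forall fun t => by positivity
    _ ≤ ∫⁻ t, ENNReal.ofReal (2 * (g t ^ 2 + g' t ^ 2)) := setLIntegral_le_lintegral _ _
    _ = ∫⁻ t, 2 * (ENNReal.ofReal (g t ^ 2) + ENNReal.ofReal (g' t ^ 2)) := by
        congr 1; funext t
        rw [ENNReal.ofReal_mul (by norm_num), ENNReal.ofReal_add (by positivity) (by positivity)]
        simp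
    _ = _ := by
        rw [lintegral_const_mul]
        exact ((hgc.pow 2).measurable.ennreal_ofReal).add ((hg'.pow 2).measurable.ennreal_ofReal)

/-- The square of a function, as an extended nonnegative function on `Fin d → ℝ`. -/
noncomputable def sqE {d : ℕ} (g : EuclideanSpace ℝ (Fin d) → ℝ) : (Fin d → ℝ) → ℝ≥0∞ :=
  fun x => ENNReal.ofReal (g (WithLp.toLp 2 x) ^ 2)

theorem measurable_sqE {d : ℕ} {g : EuclideanSpace ℝ (Fin d) → ℝ} (hg : Continuous g) :
    Measurable (sqE g) := by
  unfold sqE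
  have : Continuous fun x : Fin d → ℝ => g (WithLp.toLp 2 x) :=
    hg.comp (PiLp.continuous_toLp 2 _)
  exact (this.pow 2).measurable.ennreal_ofReal

theorem sqE_le {d : ℕ} (i : Fin d) {g : EuclideanSpace ℝ (Fin d) → ℝ}
    (hg : ContDiff ℝ (⊤ : ℕ∞) g) (x : Fin d → ℝ) :
    sqE g x ≤ 2 * ∫⁻ t, (sqE g (Function.update x i t) + sqE (pderivE i g) (Function.update x i t)) := by
  have hu : ∀ t : ℝ, WithLp.toLp 2 (Function.update x i t) =
      WithLp.toLp 2 (Function.update x i 0) + t • EuclideanSpace.single i (1 : ℝ) := by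
    intro t
    ext j
    by_cases h : j = i
    · subst h; simp
    · simp [h]
  have hp := (contDiff_pderivE i hg).continuous
  have hc : Continuous fun t : ℝ => WithLp.toLp 2 (Function.update x i t) :=
    (PiLp.continuous_toLp 2 _).comp (continuous_const.update i continuous_id)
  have := sobolev_one_dim (fun t => g (WithLp.toLp 2 (Function.update x i t)))
    (fun t => pderivE i g (WithLp.toLp 2 (Function.update x i t))) (fun t => ?_)
    (hp.comp hc) (x i)
  · simpa [sqE] using this
  · have h1 : HasDerivAt (fun t : ℝ => WithLp.toLp 2 (Function.update x i t))
        (EuclideanSpace.single i (1 : ℝ)) t := by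
      rw [funext hu]
      simpa using ((hasDerivAt_id t).smul_const (EuclideanSpace.single i (1 : ℝ))).const_add
        (WithLp.toLp 2 (Function.update x i 0))
    exact ((hg.differentiable (by simp)) _).hasFDerivAt.comp_hasDerivAt t h1

theorem lmarginal_step {d : ℕ} (i : Fin d) (s : Finset (Fin d)) (hi : i ∉ s)
    {g : EuclideanSpace ℝ (Fin d) → ℝ} (hg : ContDiff ℝ (⊤ : ℕ∞) g) (x : Fin d → ℝ) :
    lmarginal (fun _ => volume) s (sqE g) x ≤
      2 * (lmarginal (fun _ => volume) (insert i s) (sqE g) x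
        + lmarginal (fun _ => volume) (insert i s) (sqE (pderivE i g)) x) := by
  have m1 := measurable_sqE hg.continuous
  have m2 := measurable_sqE (contDiff_pderivE i hg).continuous
  rw [lmarginal_insert' _ m1 hi, lmarginal_insert' _ m2 hi]
  simp only [lmarginal]
  have n1 : Measurable fun x => ∫⁻ t, sqE g (Function.update x i t) := by
    simpa [lmarginal_singleton] using m1.lmarginal (fun _ => volume) (s := {i})
  have n2 : Measurable fun x => ∫⁻ t, sqE (pderivE i g) (Function.update x i t) := by
    simpa [lmarginal_singleton] using m2.lmarginal (fun _ => volume) (s := {i})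
  have n1' : Measurable fun y => ∫⁻ t, sqE g (Function.update (Function.updateFinset x s y) i t) :=
    n1.comp measurable_updateFinset
  have n2' : Measurable fun y =>
      ∫⁻ t, sqE (pderivE i g) (Function.update (Function.updateFinset x s y) i t) :=
    n2.comp measurable_updateFinset
  rw [← lintegral_add_left n1', ← lintegral_const_mul]
  · apply lintegral_mono
    intro y
    refine (sqE_le i hg _).trans_eq ?_
    exact congrArg (2 * ·) (lintegral_add_left (m1.comp (measurable_update _)) _)
  · exact n1'.add n2'

theorem lderiv_pointwise {d : ℕ} 
    (f : EuclideanSpace ℝ (Fin d) → ℝ) (hf : ContDiff ℝ (⊤ : ℕ∞) f)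
    (C₁ C₂ : ℝ) (hC₁ : 0 < C₁) (hC₂ : 0 < C₂)
    (hb : ∀ L : List (Fin d), eLpNorm (lderiv L f) 2 volume ≤
      ENNReal.ofReal (C₁ * C₂ ^ L.length * (L.length.factorial : ℝ))) :
    ∃ A B : ℝ, 0 < A ∧ 0 < B ∧ ∀ (L : List (Fin d)) x,
      |lderiv L f x| ≤ A * B ^ L.length * (L.length.factorial : ℝ) := by
  have key : ∀ s : Finset (Fin d), ∃ A B : ℝ, 0 < A ∧ 0 < B ∧ ∀ (L : List (Fin d)) x,
      lmarginal (fun _ => volume) sᶜ (sqE (lderiv L f)) x ≤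
        ENNReal.ofReal ((A * B ^ L.length * (L.length.factorial : ℝ)) ^ 2) := by
    intro s
    induction s using Finset.induction_on with
    | empty =>
      refine ⟨C₁, C₂, hC₁, hC₂, fun L x => ?_⟩
      rw [Finset.compl_empty, lmarginal_univ]
      have h1 : ∫⁻ y, sqE (lderiv L f) y ∂(Measure.pi fun _ => volume) =
          ∫⁻ z : EuclideanSpace ℝ (Fin d), ENNReal.ofReal (lderiv L f z ^ 2) := by
        have := (PiLp.volume_preserving_toLp (Fin d)).lintegral_comp
          (f := fun z : EuclideanSpace ℝ (Fin d) => ENNReal.ofReal (lderiv L f z ^ 2))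
          (((contDiff_lderiv L hf).continuous.pow 2).measurable.ennreal_ofReal)
        exact this
      have h2 : ∫⁻ z : EuclideanSpace ℝ (Fin d), ENNReal.ofReal (lderiv L f z ^ 2)
          = eLpNorm (lderiv L f) 2 volume ^ 2 := by
        rw [eLpNorm_eq_lintegral_rpow_enorm_toReal (by norm_num) (by norm_num)]
        rw [← ENNReal.rpow_natCast, ← ENNReal.rpow_mul]
        simp only [ENNReal.toReal_ofNat, Nat.cast_ofNat, one_div]
        norm_num
        congr 1; funext z
        rw [Real.enorm_eq_ofReal_abs, ← ENNReal.ofReal_pow (abs_nonneg _), sq_abs]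
      rw [h1, h2, ENNReal.ofReal_pow (by positivity)]
      exact pow_le_pow_left' (hb L) 2
    | insert i s hi ih =>
      obtain ⟨A, B, hA, hB, h⟩ := ih
      refine ⟨2 * (A * (1 + B)), 2 * B, by positivity, by positivity, fun L x => ?_⟩
      have hi' : i ∉ (insert i s)ᶜ := by simp
      have hins : insert i (insert i s)ᶜ = sᶜ := by
        ext j; by_cases hj : j = i
        · subst hj; simp [hi]
        · simp [hj]
      have := lmarginal_step i _ hi' (contDiff_lderiv L hf) x
      rw [hins] at this
      refine this.trans ?_
      have hl := h (i :: L) x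
      refine (mul_le_mul_right (add_le_add (h L x) hl) 2).trans ?_
      rw [← ENNReal.ofReal_add (by positivity) (by positivity)]
      rw [show (2 : ℝ≥0∞) = ENNReal.ofReal 2 by simp, ← ENNReal.ofReal_mul (by norm_num)]
      apply ENNReal.ofReal_le_ofReal
      rw [List.length_cons, Nat.factorial_succ]
      set n := L.length
      have hn : ((n + 1 : ℕ) : ℝ) ≤ 2 ^ n := by exact_mod_cast Nat.lt_two_pow_self
      have hn1 : (1 : ℝ) ≤ 2 ^ n := one_le_pow₀ (by norm_num)
      set P := A * B ^ n * (n.factorial : ℝ) with hP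
      have hP0 : 0 ≤ P := by positivity
      have e1 : A * B ^ (n + 1) * (((n + 1) * n.factorial : ℕ) : ℝ) ≤ B * 2 ^ n * P := by
        calc _ = B * ((n + 1 : ℕ) : ℝ) * P := by rw [hP]; push_cast; ring
          _ ≤ _ := by gcongr
      have e2 : 2 * (A * (1 + B)) * (2 * B) ^ n * (n.factorial : ℝ) = 2 * (1 + B) * 2 ^ n * P := by
        rw [hP, mul_pow]; ring
      rw [e2]
      have e3 : P ≤ 2 ^ n * P := le_mul_of_one_le_left hP0 hn1
      have e4 := pow_le_pow_left₀ (by positivity) e1 2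
      have e5 := pow_le_pow_left₀ hP0 e3 2
      have : 0 ≤ B * (2 ^ n * P) ^ 2 := by positivity
      have : 0 ≤ B ^ 2 * (2 ^ n * P) ^ 2 := by positivity
      nlinarith [sq_nonneg (2 ^ n * P)]
  obtain ⟨A, B, hA, hB, h⟩ := key Finset.univ
  refine ⟨A, B, hA, hB, fun L x => ?_⟩
  have := h L (WithLp.ofLp x)
  rw [Finset.compl_univ, lmarginal_empty] at this
  unfold sqE at this
  rw [ENNReal.ofReal_le_ofReal_iff (by positivity)] at this
  exact abs_le_of_sq_le_sq this (by positivity)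

/-- Lemma A.1 (a smooth function with L² derivative bounds of analytic type is
real-analytic on `ℝ^d`). -/
theorem analyticity_lemma
    (d : ℕ) (hd : 1 ≤ d)
    (f : EuclideanSpace ℝ (Fin d) → ℝ) (hf : ContDiff ℝ (⊤ : ℕ∞) f)
    (C₁ C₂ : ℝ) (hC₁ : 0 < C₁) (hC₂ : 0 < C₂)
    (hbound : ∀ β : Fin d → ℕ,
      eLpNorm (mderiv β f) 2 volume ≤
        ENNReal.ofReal (C₁ * C₂ ^ (∑ i, β i) * ((∏ i, (β i).factorial : ℕ) : ℝ))) :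
    AnalyticOnNhd ℝ f Set.univ := by
  obtain ⟨A, B, hA, hB, h⟩ := lderiv_pointwise f hf C₁ C₂ hC₁ hC₂
    (lderiv_eLpNorm f hf C₁ C₂ hC₁ hC₂ hbound)
  intro x _
  have hd' : (0 : ℝ) < d := by exact_mod_cast hd
  refine analytic_of_bound f hf A (d * B) hA.le (by positivity) (fun n y => ?_) x
  refine (norm_iteratedFDeriv_le_of_lderiv f hf n y (A * B ^ n * (n.factorial : ℝ))
    (by positivity) (fun L hL => ?_)).trans_eq ?_
  · rw [← hL]; exact h L y
  · rw [mul_pow]; ring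
end

section
/- Let D ≥ 1/2 and s ∈ [0,1). Then Σ_{m=0}^∞ D^m/(m!)^{1−s} ≤ 2 · (2D)^{3·(2D)^{1/(1−s)}}. -/
lemma aux_key (y : ℝ) (hy : 1 ≤ y) (m : ℕ) : y ^ m / (m.factorial : ℝ) ≤ y ^ (3 * y) := by
  have hf : (1 : ℝ) ≤ m.factorial := by exact_mod_cast Nat.factorial_pos m
  by_cases h : (m : ℝ) ≤ 3 * y
  · calc y ^ m / (m.factorial : ℝ) ≤ y ^ m := div_le_self (by positivity) hf
      _ = y ^ (m : ℝ) := (Real.rpow_natCast y m).symm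
      _ ≤ y ^ (3 * y) := Real.rpow_le_rpow_of_exponent_le hy h
  · push Not at h
    have h1 : (1 : ℝ) ≤ y ^ (3 * y) := Real.one_le_rpow hy (by positivity)
    refine le_trans ?_ h1
    have h2 : (m : ℝ) ^ m / m.factorial ≤ Real.exp m :=
      Real.pow_div_factorial_le_exp (m : ℝ) (by positivity) m
    have h3 : Real.exp m ≤ 3 ^ m := by
      rw [← Real.exp_one_pow]
      exact pow_le_pow_left₀ (by positivity) (by linarith [Real.exp_one_lt_d9]) m
    have h4 : (3 * y) ^ m ≤ (m : ℝ) ^ m := pow_le_pow_left₀ (by positivity) h.le m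
    rw [mul_pow] at h4
    rw [div_le_iff₀ (by positivity)] at h2 ⊢
    have h5 : (3 : ℝ) ^ m * y ^ m ≤ 3 ^ m * m.factorial :=
      h4.trans (h2.trans (mul_le_mul_of_nonneg_right h3 (by positivity)))
    rw [one_mul]
    exact le_of_mul_le_mul_left h5 (by positivity)

/-- Lemma A.2 (a bound on the series `Σ_m D^m/(m!)^{1-s}`). -/
theorem series_bound (D s : ℝ) (hD : 1 / 2 ≤ D) (hs0 : 0 ≤ s) (hs1 : s < 1) :
    ∑' m : ℕ, D ^ m / (m.factorial : ℝ) ^ (1 - s) ≤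
      2 * (2 * D) ^ (3 * (2 * D) ^ (1 / (1 - s))) := by
  have ha : 0 < 1 - s := by linarith
  set a := 1 - s
  have hx : 1 ≤ 2 * D := by linarith
  set y := (2 * D) ^ (1 / a) with hyd
  have hy : 1 ≤ y := Real.one_le_rpow hx (by positivity)
  have hy0 : 0 ≤ y := by linarith
  have hya : y ^ a = 2 * D := by
    rw [hyd, ← Real.rpow_mul (by linarith), one_div_mul_cancel ha.ne', Real.rpow_one]
  set C := (2 * D) ^ (3 * y) with hC
  have hD0 : 0 ≤ D := by linarith
  have hb : ∀ m : ℕ, D ^ m / (m.factorial : ℝ) ^ a ≤ C * (1 / 2) ^ m := by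
    intro m
    have h1 : (2 * D) ^ m / (m.factorial : ℝ) ^ a ≤ C := by
      have h2 := Real.rpow_le_rpow (by positivity) (aux_key y hy m) ha.le
      rw [Real.div_rpow (by positivity) (by positivity), ← Real.rpow_natCast,
        ← Real.rpow_mul hy0, ← Real.rpow_mul hy0, mul_comm _ a, mul_comm _ a,
        Real.rpow_mul hy0, Real.rpow_mul hy0, hya, Real.rpow_natCast] at h2
      exact h2
    calc D ^ m / (m.factorial : ℝ) ^ a
        = (2 * D) ^ m / (m.factorial : ℝ) ^ a * (1 / 2) ^ m := by
          rw [div_mul_eq_mul_div, ← mul_pow]; congr 2; ring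
      _ ≤ _ := mul_le_mul_of_nonneg_right h1 (by positivity)
  have hg : HasSum (fun m : ℕ => C * (1 / 2 : ℝ) ^ m) (C * 2) := hasSum_geometric_two.mul_left C
  have hsum := Summable.of_nonneg_of_le (fun m => by positivity) hb hg.summable
  calc _ ≤ ∑' m : ℕ, C * (1 / 2 : ℝ) ^ m := hsum.tsum_le_tsum hb hg.summable
    _ = 2 * C := by rw [hg.tsum_eq, mul_comm]
end

section
/- Let s ∈ [0,1), τ ∈ (0,1], and let m be a positive integer with m ≥ 3/τ^{1/(1−s)}. Then (m!)^s ≤ τ^m · m!. -/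
/-- The elementary factorial estimate `(m!)^s ≤ τ^m · m!` for
`m ≥ 3/τ^{1/(1-s)}`, used in the proof of Lemma A.2. -/
theorem factorial_power_bound
    (s τ : ℝ) (hs0 : 0 ≤ s) (hs1 : s < 1) (hτ0 : 0 < τ) (hτ1 : τ ≤ 1)
    (m : ℕ) (hm : 0 < m) (hm3 : 3 / τ ^ (1 / (1 - s)) ≤ (m : ℝ)) :
    (m.factorial : ℝ) ^ s ≤ τ ^ m * (m.factorial : ℝ) := by
  have h1s : 0 < 1 - s := by linarith
  obtain ⟨t, ht⟩ : ∃ t, t = τ ^ (1 / (1 - s)) := ⟨_, rfl⟩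
  have ht0 : 0 < t := by rw [ht]; positivity
  have htτ : t ^ (1 - s) = τ := by
    rw [ht, ← Real.rpow_mul hτ0.le, one_div_mul_cancel h1s.ne', Real.rpow_one]
  rw [← ht, div_le_iff₀ ht0] at hm3
  have hf : (0 : ℝ) < m.factorial := by exact_mod_cast m.factorial_pos
  have h1 : (m : ℝ) ^ m ≤ 3 ^ m * m.factorial := by
    have h := Real.pow_div_factorial_le_exp (m : ℝ) (Nat.cast_nonneg m) m
    rw [div_le_iff₀ hf] at h
    have h3 : Real.exp m ≤ 3 ^ m := by
      rw [← Real.exp_one_pow]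
      exact pow_le_pow_left₀ (Real.exp_pos 1).le Real.exp_one_lt_three.le m
    exact h.trans (mul_le_mul_of_nonneg_right h3 hf.le)
  have h2 : 1 ≤ t ^ m * m.factorial := by
    have h4 : (3 : ℝ) ^ m ≤ m ^ m * t ^ m := by
      rw [← mul_pow]; exact pow_le_pow_left₀ (by norm_num) hm3 m
    have h5 : (m : ℝ) ^ m * t ^ m ≤ 3 ^ m * m.factorial * t ^ m :=
      mul_le_mul_of_nonneg_right h1 (by positivity)
    have h6 : (0 : ℝ) < 3 ^ m := by positivity
    refine le_of_mul_le_mul_left ?_ h6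
    linarith
  have h3 := Real.one_le_rpow h2 h1s.le
  rw [Real.mul_rpow (by positivity) hf.le, ← Real.rpow_pow_comm ht0.le, htτ] at h3
  calc (m.factorial : ℝ) ^ s = 1 * (m.factorial : ℝ) ^ s := (one_mul _).symm
    _ ≤ τ ^ m * (m.factorial : ℝ) ^ (1 - s) * (m.factorial : ℝ) ^ s :=
      mul_le_mul_of_nonneg_right h3 (by positivity)
    _ = τ ^ m * (m.factorial : ℝ) := by
      rw [mul_assoc, ← Real.rpow_add hf, sub_add_cancel, Real.rpow_one]
end
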